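/- arXiv:0710.3065 — 2 statements merged into one kernel-verified Lean document; each statement's English description precedes it below -/
import Mathlib

section
/- Let α_- ≤ α_+ be real numbers, R > 0, and let ρ : ℝ → [0, ∞) be a measurable function with ρ ≤ R and ρ = 0 outside [α_-, α_+]. Fix s ∈ (0, 1) and constants C̃ ≥ 0, C_b ≥ 0, and β > 0. Then there exists λ₀ > 0 such that for all λ ≥ λ₀, all a ∈ ℝ, and all c ∈ [0, C_b], one has c · (1 + c·C̃·λ^{−s}) · ∫_ℝ |a + λV|^{−s} ρ(V) dV < β. -/
open MeasureTheory

noncomputable section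

def gAux (s : ℝ) : ℝ → ENNReal :=
  (Set.Ioc (0:ℝ) 1).indicator (fun u => ENNReal.ofReal (u ^ (-s)))

theorem gAux_meas (s : ℝ) : Measurable (gAux s) := by
  unfold gAux
  exact Measurable.indicator (by fun_prop) measurableSet_Ioc

theorem gAux_fin (s : ℝ) (hs : s < 1) : ∫⁻ u, gAux s u ≠ ⊤ := by
  unfold gAux
  rw [lintegral_indicator measurableSet_Ioc]
  have h : IntervalIntegrable (fun x : ℝ => x ^ (-s)) volume 0 1 :=
    intervalIntegral.intervalIntegrable_rpow' (by linarith)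
  rw [intervalIntegrable_iff_integrableOn_Ioc_of_le zero_le_one] at h
  exact (Integrable.lintegral_lt_top h).ne

theorem gAux_pt (s : ℝ) (hs : 0 < s) (u : ℝ) :
    ENNReal.ofReal (|u| ^ (-s)) ≤ gAux s u + gAux s (-u) + 1 := by
  by_cases h1 : 1 < |u|
  · refine le_trans ?_ le_add_self
    rw [ENNReal.ofReal_le_one]
    exact Real.rpow_le_one_of_one_le_of_nonpos h1.le (by linarith)
  · refine le_trans ?_ le_self_add
    push Not at h1
    have := abs_le.mp h1
    rcases lt_trichotomy u 0 with h | h | h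
    · refine le_trans ?_ le_add_self
      rw [gAux, Set.indicator_of_mem (by constructor <;> linarith), abs_of_neg h]
    · subst h
      simp [Real.zero_rpow (show -s ≠ 0 by linarith)]
    · refine le_trans ?_ le_self_add
      rw [gAux, Set.indicator_of_mem (by constructor <;> linarith), abs_of_pos h]

theorem strong_disorder_single_site_criterion
    (αminus αplus R : ℝ) (hle : αminus ≤ αplus) (hR : 0 < R)
    (ρ : ℝ → ℝ) (hρmeas : Measurable ρ) (hρnn : ∀ v, 0 ≤ ρ v) (hρbd : ∀ v, ρ v ≤ R)
    (hρsupp : ∀ v, v ∉ Set.Icc αminus αplus → ρ v = 0)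
    (s : ℝ) (hs : s ∈ Set.Ioo (0 : ℝ) 1)
    (Ctilde Cb β : ℝ) (hCtilde : 0 ≤ Ctilde) (hCb : 0 ≤ Cb) (hβ : 0 < β) :
    ∃ lam₀ > (0 : ℝ), ∀ lam ≥ lam₀, ∀ a : ℝ, ∀ c ∈ Set.Icc (0 : ℝ) Cb,
      ENNReal.ofReal (c * (1 + c * Ctilde * lam ^ (-s))) *
          (∫⁻ V, ENNReal.ofReal (|a + lam * V| ^ (-s) * ρ V)) <
        ENNReal.ofReal β := by
  obtain ⟨hs0, hs1⟩ := hs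
  set K : ENNReal := ∫⁻ u, gAux s u with hK
  have hKf : K ≠ ⊤ := gAux_fin s hs1
  set M : ENNReal := ENNReal.ofReal R * (K + K + ENNReal.ofReal (αplus - αminus)) with hM
  have hMf : M ≠ ⊤ := by
    apply ENNReal.mul_ne_top ENNReal.ofReal_ne_top
    simp [hKf]
  have key : ∀ lam : ℝ, 0 < lam → ∀ a : ℝ,
      (∫⁻ V, ENNReal.ofReal (|a + lam * V| ^ (-s) * ρ V)) ≤
        ENNReal.ofReal (lam ^ (-s)) * M := by
    intro lam hl a
    set I : ℝ → ENNReal := (Set.Icc αminus αplus).indicator (fun _ => 1) with hI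
    have hImeas : Measurable I := measurable_const.indicator measurableSet_Icc
    have hg := gAux_meas s
    have pt : ∀ V, ENNReal.ofReal (|a + lam * V| ^ (-s) * ρ V) ≤
        ENNReal.ofReal (lam ^ (-s)) * (ENNReal.ofReal R *
          (gAux s (V + a / lam) + gAux s (-(V + a / lam)) + I V)) := by
      intro V
      by_cases hV : V ∈ Set.Icc αminus αplus
      · have e : a + lam * V = lam * (V + a / lam) := by field_simp; ring
        rw [e, abs_mul, abs_of_pos hl, Real.mul_rpow hl.le (abs_nonneg _), mul_assoc,
          ENNReal.ofReal_mul (by positivity), mul_comm (_ ^ (-s)) (ρ V),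
          ENNReal.ofReal_mul (hρnn V)]
        have hIV : I V = 1 := by simp [hI, hV]
        rw [hIV]
        gcongr
        · exact hρbd V
        · exact gAux_pt s hs0 _
      · simp [hρsupp V hV]
    refine (lintegral_mono pt).trans ?_
    rw [lintegral_const_mul _ (by fun_prop), lintegral_const_mul _ (by fun_prop),
      lintegral_add_right _ hImeas, lintegral_add_left (by fun_prop),
      lintegral_add_right_eq_self (fun u => gAux s u) (a / lam),
      lintegral_add_right_eq_self (fun u => gAux s (-u)) (a / lam),
      lintegral_neg_eq_self (fun u => gAux s u)]
    rw [hI, lintegral_indicator measurableSet_Icc]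
    simp [hM, hK]
  have ht : Filter.Tendsto (fun lam : ℝ => lam ^ (-s)) Filter.atTop (nhds 0) :=
    tendsto_rpow_neg_atTop hs0
  have ht2 : Filter.Tendsto
      (fun lam : ℝ => (Cb * (1 + Cb * Ctilde * lam ^ (-s))) * (lam ^ (-s) * M.toReal))
      Filter.atTop (nhds ((Cb * (1 + Cb * Ctilde * 0)) * (0 * M.toReal))) :=
    ((ht.const_mul _).const_add _ |>.const_mul _).mul (ht.mul_const _)
  have hev := ht2.eventually_lt_const (u := β) (by simpa using hβ)
  obtain ⟨N, hN⟩ := Filter.eventually_atTop.mp hev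
  refine ⟨max N 1, by positivity, fun lam hlam a c hc => ?_⟩
  have hl : 0 < lam := lt_of_lt_of_le one_pos ((le_max_right _ _).trans hlam)
  have hb := hN lam ((le_max_left _ _).trans hlam)
  obtain ⟨hc0, hc1⟩ := hc
  calc _ ≤ ENNReal.ofReal (Cb * (1 + Cb * Ctilde * lam ^ (-s))) *
        (ENNReal.ofReal (lam ^ (-s)) * M) := by
          gcongr
          exact key lam hl a
    _ = ENNReal.ofReal ((Cb * (1 + Cb * Ctilde * lam ^ (-s))) * (lam ^ (-s) * M.toReal)) := by
          rw [ENNReal.ofReal_mul (p := Cb * (1 + Cb * Ctilde * lam ^ (-s))) (by positivity),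
            ENNReal.ofReal_mul (p := lam ^ (-s)) (by positivity),
            ENNReal.ofReal_toReal hMf]
    _ < _ := (ENNReal.ofReal_lt_ofReal_iff hβ).2 hb

end
end

section
/- Let d ≥ 1 and let l_1, …, l_d > 0. For each j ∈ {1, …, d} let φ_j, φ̂_j : [0, l_j] → ℂ be continuous functions that are linearly independent as elements of L²([0, l_j]), and let w_j ∈ ℂ with w_j ≠ 0. For ξ ∈ ℓ²(ℤ^d; ℂ) and (m, j) ∈ ℤ^d × {1, …, d} define f_{m,j} ∈ L²([0, l_j]) by f_{m,j}(t) = (ξ(m + h_j)·φ_j(t) + ξ(m)·φ̂_j(t))/w_j, where h_1, …, h_d is the standard basis of ℤ^d. Then there exist constants 0 < c ≤ C, depending only on the functions φ_j, φ̂_j and the numbers w_j, such that for every ξ ∈ ℓ²(ℤ^d; ℂ): c·‖ξ‖² ≤ Σ_{m∈ℤ^d} Σ_{j=1}^d ‖f_{m,j}‖²_{L²([0, l_j])} ≤ C·‖ξ‖² (in particular the double sum is finite). Moreover one may take C = 2 Σ_{j=1}^d (‖φ_j‖² + ‖φ̂_j‖²)/|w_j|². -/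
open MeasureTheory

noncomputable section

theorem gm_upper (l : ℝ) (f g : ℝ → ℂ) (hf : ContinuousOn f (Set.Icc 0 l))
    (hg : ContinuousOn g (Set.Icc 0 l)) (w : ℂ) (a b : ℂ) :
    (∫ t in Set.Icc 0 l, ‖(a * f t + b * g t) / w‖ ^ 2) ≤
      (2 * ((∫ t in Set.Icc 0 l, ‖f t‖ ^ 2) / ‖w‖ ^ 2)) * ‖a‖ ^ 2
      + (2 * ((∫ t in Set.Icc 0 l, ‖g t‖ ^ 2) / ‖w‖ ^ 2)) * ‖b‖ ^ 2 := by
  have h1 : IntegrableOn (fun t => ‖f t‖ ^ 2) (Set.Icc 0 l) :=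
    (hf.norm.pow 2).integrableOn_compact isCompact_Icc
  have h2 : IntegrableOn (fun t => ‖g t‖ ^ 2) (Set.Icc 0 l) :=
    (hg.norm.pow 2).integrableOn_compact isCompact_Icc
  have h3 : IntegrableOn (fun t => ‖(a * f t + b * g t) / w‖ ^ 2) (Set.Icc 0 l) := by
    apply ContinuousOn.integrableOn_compact isCompact_Icc
    exact (((hf.const_smul a).add (hg.const_smul b)).div_const w).norm.pow 2
  have e : (2 * ((∫ t in Set.Icc 0 l, ‖f t‖ ^ 2) / ‖w‖ ^ 2)) * ‖a‖ ^ 2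
      + (2 * ((∫ t in Set.Icc 0 l, ‖g t‖ ^ 2) / ‖w‖ ^ 2)) * ‖b‖ ^ 2
      = ∫ t in Set.Icc 0 l, ((2 * ‖a‖ ^ 2 / ‖w‖ ^ 2) * ‖f t‖ ^ 2
        + (2 * ‖b‖ ^ 2 / ‖w‖ ^ 2) * ‖g t‖ ^ 2) := by
    rw [integral_add (h1.const_mul _) (h2.const_mul _), integral_const_mul, integral_const_mul]
    ring
  rw [e]
  apply integral_mono h3 ((h1.const_mul _).add (h2.const_mul _))
  intro t
  simp only [Pi.add_apply]
  rw [norm_div, div_pow]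
  have : ‖a * f t + b * g t‖ ^ 2 ≤ 2 * ‖a‖ ^ 2 * ‖f t‖ ^ 2 + 2 * ‖b‖ ^ 2 * ‖g t‖ ^ 2 := by
    have h := norm_add_le (a * f t) (b * g t)
    rw [norm_mul, norm_mul] at h
    have h' := pow_le_pow_left₀ (norm_nonneg _) h 2
    nlinarith [sq_nonneg (‖a‖ * ‖f t‖ - ‖b‖ * ‖g t‖)]
  calc _ ≤ (2 * ‖a‖ ^ 2 * ‖f t‖ ^ 2 + 2 * ‖b‖ ^ 2 * ‖g t‖ ^ 2) / ‖w‖ ^ 2 := by gcongr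
    _ = _ := by ring

theorem gm_lower (l : ℝ) (f g : ℝ → ℂ) (hf : ContinuousOn f (Set.Icc 0 l))
    (hg : ContinuousOn g (Set.Icc 0 l)) (w : ℂ) (hw : w ≠ 0)
    (hind : ∀ c₁ c₂ : ℂ,
      (∀ᵐ t ∂(volume.restrict (Set.Icc 0 l)), c₁ * f t + c₂ * g t = 0) →
      c₁ = 0 ∧ c₂ = 0) :
    ∃ k : ℝ, 0 < k ∧ ∀ a b : ℂ,
      k * ‖b‖ ^ 2 ≤ ∫ t in Set.Icc 0 l, ‖(a * f t + b * g t) / w‖ ^ 2 := by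
  have mem : ∀ u : ℝ → ℂ, ContinuousOn u (Set.Icc 0 l) →
      MemLp u 2 (volume.restrict (Set.Icc 0 l)) := by
    intro u hu
    rw [memLp_two_iff_integrable_sq_norm (hu.aestronglyMeasurable measurableSet_Icc)]
    exact (hu.norm.pow 2).integrableOn_compact isCompact_Icc
  let F := (mem f hf).toLp f
  let G := (mem g hg).toLp g
  let T : (ℂ × ℂ) →ₗ[ℂ] Lp ℂ 2 (volume.restrict (Set.Icc 0 l)) :=
    (LinearMap.toSpanSingleton ℂ _ F).coprod (LinearMap.toSpanSingleton ℂ _ G)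
  have hT : ∀ a b : ℂ, (T (a, b) : ℝ → ℂ) =ᵐ[volume.restrict (Set.Icc 0 l)]
      fun t => a * f t + b * g t := by
    intro a b
    have e : T (a, b) = a • F + b • G := by simp [T]
    rw [e]
    filter_upwards [Lp.coeFn_add (a • F) (b • G), Lp.coeFn_smul a F, Lp.coeFn_smul b G,
      (mem f hf).coeFn_toLp, (mem g hg).coeFn_toLp] with t h1 h2 h3 h4 h5
    rw [h1, Pi.add_apply, h2, h3, Pi.smul_apply, Pi.smul_apply, h4, h5, smul_eq_mul, smul_eq_mul]
  have hker : LinearMap.ker T = ⊥ := by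
    rw [LinearMap.ker_eq_bot']
    rintro ⟨a, b⟩ h
    have h0 := hT a b
    rw [h] at h0
    have := hind a b (by
      filter_upwards [h0, Lp.coeFn_zero ℂ 2 (volume.restrict (Set.Icc 0 l))] with t h1 h2
      rw [← h1, h2]; rfl)
    simp [this.1, this.2]
  obtain ⟨K, hK, hA⟩ := LinearMap.exists_antilipschitzWith T hker
  have hK' : (0 : ℝ) < K := hK
  have hwn : 0 < ‖w‖ := norm_pos_iff.2 hw
  refine ⟨1 / (K ^ 2 * ‖w‖ ^ 2), by positivity, fun a b => ?_⟩
  have h1 : ‖b‖ ≤ K * ‖T (a, b)‖ := by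
    have h2 : ‖((a, b) : ℂ × ℂ)‖ ≤ K * ‖T (a, b)‖ := by
      have := hA.le_mul_dist (a, b) 0
      simpa only [map_zero, dist_zero_right] using this
    exact (norm_snd_le (a, b)).trans h2
  have h3 : ‖T (a, b)‖ ^ 2 = ∫ t in Set.Icc 0 l, ‖a * f t + b * g t‖ ^ 2 := by
    have h4 := L2.inner_def (𝕜 := ℂ) (T (a, b)) (T (a, b))
    have h6 : ∫ t in Set.Icc 0 l, inner ℂ (T (a, b) t) (T (a, b) t)
        = ∫ t in Set.Icc 0 l, ((‖a * f t + b * g t‖ ^ 2 : ℝ) : ℂ) := by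
      apply integral_congr_ae
      filter_upwards [hT a b] with t ht
      rw [ht, inner_self_eq_norm_sq_to_K]
      simp
    rw [h6, integral_complex_ofReal, inner_self_eq_norm_sq_to_K] at h4
    apply Complex.ofReal_injective
    rw [← h4]
    simp
  have h5 : (∫ t in Set.Icc 0 l, ‖(a * f t + b * g t) / w‖ ^ 2) = ‖T (a, b)‖ ^ 2 / ‖w‖ ^ 2 := by
    rw [h3, ← integral_div]
    simp only [norm_div, div_pow]
  rw [h5, one_div_mul_eq_div, div_le_div_iff₀ (by positivity) (by positivity)]
  have h7 := pow_le_pow_left₀ (norm_nonneg _) h1 2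
  calc ‖b‖ ^ 2 * ‖w‖ ^ 2 ≤ (K * ‖T (a, b)‖) ^ 2 * ‖w‖ ^ 2 := by gcongr
    _ = _ := by ring

theorem gm_shift {d : ℕ} (u : (Fin d → ℤ) → ℝ) (S : ℝ) (h : HasSum u S) (v : Fin d → ℤ) :
    HasSum (fun m => u (m + v)) S :=
  (Equiv.addRight v).hasSum_iff.2 h

theorem gamma_map_is_topological_isomorphism_onto_range
    (d : ℕ) (hd : 1 ≤ d) (l : Fin d → ℝ) (hl : ∀ j, 0 < l j)
    (φ φhat : Fin d → ℝ → ℂ)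
    (hφc : ∀ j, ContinuousOn (φ j) (Set.Icc 0 (l j)))
    (hφhatc : ∀ j, ContinuousOn (φhat j) (Set.Icc 0 (l j)))
    -- linear independence of φ j and φhat j as elements of L²([0, l j])
    (hind : ∀ j, ∀ c₁ c₂ : ℂ,
      (∀ᵐ t ∂(volume.restrict (Set.Icc 0 (l j))), c₁ * φ j t + c₂ * φhat j t = 0) →
      c₁ = 0 ∧ c₂ = 0)
    (w : Fin d → ℂ) (hw : ∀ j, w j ≠ 0) :
    ∃ c : ℝ, 0 < c ∧
      c ≤ 2 * ∑ j, ((∫ t in Set.Icc 0 (l j), ‖φ j t‖ ^ 2) +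
          (∫ t in Set.Icc 0 (l j), ‖φhat j t‖ ^ 2)) / ‖w j‖ ^ 2 ∧
      ∀ ξ : lp (fun _ : Fin d → ℤ => ℂ) 2,
        Summable (fun m : Fin d → ℤ => ∑ j, ∫ t in Set.Icc 0 (l j),
          ‖(ξ (m + Pi.single j 1) * φ j t + ξ m * φhat j t) / w j‖ ^ 2) ∧
        c * ‖ξ‖ ^ 2 ≤ (∑' m : Fin d → ℤ, ∑ j, ∫ t in Set.Icc 0 (l j),
          ‖(ξ (m + Pi.single j 1) * φ j t + ξ m * φhat j t) / w j‖ ^ 2) ∧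
        (∑' m : Fin d → ℤ, ∑ j, ∫ t in Set.Icc 0 (l j),
          ‖(ξ (m + Pi.single j 1) * φ j t + ξ m * φhat j t) / w j‖ ^ 2) ≤
          (2 * ∑ j, ((∫ t in Set.Icc 0 (l j), ‖φ j t‖ ^ 2) +
            (∫ t in Set.Icc 0 (l j), ‖φhat j t‖ ^ 2)) / ‖w j‖ ^ 2) * ‖ξ‖ ^ 2 := by
  have hup := fun j => gm_upper (l j) (φ j) (φhat j) (hφc j) (hφhatc j) (w j)
  let j0 : Fin d := ⟨0, hd⟩
  obtain ⟨k, hk, hlow⟩ := gm_lower (l j0) (φ j0) (φhat j0) (hφc j0) (hφhatc j0) (w j0) (hw j0)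
    (hind j0)
  set A : Fin d → ℝ := fun j => ∫ t in Set.Icc 0 (l j), ‖φ j t‖ ^ 2 with hA
  set B : Fin d → ℝ := fun j => ∫ t in Set.Icc 0 (l j), ‖φhat j t‖ ^ 2 with hB
  have hA0 : ∀ j, 0 ≤ A j := fun j => integral_nonneg fun t => by positivity
  have hB0 : ∀ j, 0 ≤ B j := fun j => integral_nonneg fun t => by positivity
  refine ⟨k, hk, ?_, fun ξ => ?_⟩
  · have h1 := (hlow 0 1).trans (hup j0 0 1)
    have h2 : (A j0 + B j0) / ‖w j0‖ ^ 2 ≤ ∑ j, (A j + B j) / ‖w j‖ ^ 2 :=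
      Finset.single_le_sum (f := fun j => (A j + B j) / ‖w j‖ ^ 2)
        (fun j _ => div_nonneg (add_nonneg (hA0 j) (hB0 j)) (by positivity)) (Finset.mem_univ j0)
    have h3 : B j0 / ‖w j0‖ ^ 2 ≤ (A j0 + B j0) / ‖w j0‖ ^ 2 := by
      gcongr; linarith [hA0 j0]
    have h4 : k ≤ 2 * (B j0 / ‖w j0‖ ^ 2) := by simpa using h1
    change k ≤ 2 * ∑ j, (A j + B j) / ‖w j‖ ^ 2
    linarith
  · have hS : HasSum (fun m : Fin d → ℤ => ‖ξ m‖ ^ 2) (‖ξ‖ ^ 2) := by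
      have := lp.hasSum_norm (p := 2) (by norm_num) ξ
      simpa using this
    have hS' : ∀ j : Fin d, HasSum (fun m : Fin d → ℤ => ‖ξ (m + Pi.single j 1)‖ ^ 2)
        (‖ξ‖ ^ 2) := fun j => gm_shift _ _ hS _
    have hC : HasSum (fun m : Fin d → ℤ => ∑ j, ((2 * (A j / ‖w j‖ ^ 2)) *
        ‖ξ (m + Pi.single j 1)‖ ^ 2 + (2 * (B j / ‖w j‖ ^ 2)) * ‖ξ m‖ ^ 2))
        (∑ j, ((2 * (A j / ‖w j‖ ^ 2)) * ‖ξ‖ ^ 2 + (2 * (B j / ‖w j‖ ^ 2)) * ‖ξ‖ ^ 2)) :=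
      hasSum_sum fun j _ => ((hS' j).mul_left _).add (hS.mul_left _)
    have hpt := fun m : Fin d → ℤ => Finset.sum_le_sum fun j (_ : j ∈ Finset.univ) =>
      hup j (ξ (m + Pi.single j 1)) (ξ m)
    have hnn : ∀ (m : Fin d → ℤ) (j : Fin d), 0 ≤ ∫ t in Set.Icc 0 (l j),
          ‖(ξ (m + Pi.single j 1) * φ j t + ξ m * φhat j t) / w j‖ ^ 2 :=
      fun m j => integral_nonneg fun t => by positivity
    have hsum := Summable.of_nonneg_of_le
      (fun m => Finset.sum_nonneg fun j _ => hnn m j) hpt hC.summable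
    refine ⟨hsum, ?_, ?_⟩
    · refine hasSum_le (fun m => ?_) (hS.mul_left k) hsum.hasSum
      exact (hlow (ξ (m + Pi.single j0 1)) (ξ m)).trans (Finset.single_le_sum (f := fun j => ∫ t in Set.Icc 0 (l j),
          ‖(ξ (m + Pi.single j 1) * φ j t + ξ m * φhat j t) / w j‖ ^ 2)
          (fun j _ => hnn m j) (Finset.mem_univ j0))
    · refine (hasSum_le hpt hsum.hasSum hC).trans (le_of_eq ?_)
      rw [Finset.mul_sum, Finset.sum_mul]
      refine Finset.sum_congr rfl fun j _ => ?_
      simp only [hA, hB]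
      ring

end
end
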